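/- There exists a constant K₄ > 0 depending only on m and n such that for every v with 1 ≤ v ≤ m and all A', A'' ∈ ℒ^{mn}, ‖∇D_v(A') − ∇D_v(A'')‖_∞ ≤ K₄ ‖M_{v-1}(A') − M_{v-1}(A'')‖_∞. -/

import Mathlib

/-!
Common setup: the field `ℒ = 𝔽((X⁻¹))` of formal Laurent series with coefficients
in a finite field `𝔽` of `k` elements.  We realize `ℒ` as `LaurentSeries 𝔽`
(Hahn series over `ℤ`) in the variable `T = X⁻¹`, so that `X` corresponds to `T⁻¹`
and the polynomial ring `𝔽[X]` corresponds to series supported on nonpositive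
exponents.  The absolute value of `x = Σ_{i ≤ N} a_i X^i` (with `a_N ≠ 0`) is
`k^N`, i.e. `k^(-order x)` in terms of the `T`-adic order.
-/

open scoped Classical ENNReal NNReal
open MeasureTheory

noncomputable section

namespace FSBad

/-- The field `ℒ = 𝔽((X⁻¹))`. -/
abbrev L (𝔽 : Type) [Field 𝔽] : Type := LaurentSeries 𝔽

variable {𝔽 : Type} [Field 𝔽] [Fintype 𝔽]

/-- The absolute value `‖·‖` on `ℒ`: `‖x‖ = k^(deg_X x)`, `‖0‖ = 0`. -/
def lnorm (x : L 𝔽) : ℝ := if x = 0 then 0 else (Fintype.card 𝔽 : ℝ) ^ (-x.order)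

/-- Membership in the polynomial ring `𝔽[X] ⊆ ℒ` (polynomials in `X = T⁻¹`). -/
def IsPoly (x : L 𝔽) : Prop := ∀ i : ℤ, 0 < i → x.coeff i = 0

/-- The height (sup-norm) `‖·‖_∞` on `ℒ^ι`. -/
def vnorm {ι : Type*} (x : ι → L 𝔽) : ℝ := ⨆ i, lnorm (x i)

/-- The closed ball in `ℒ^ι` with centre `c` and radius `ρ`. -/
def vball {ι : Type*} (c : ι → L 𝔽) (ρ : ℝ) : Set (ι → L 𝔽) :=
  {x | vnorm (fun i => x i - c i) ≤ ρ}

/-- `m × n` matrices over `ℒ`, identified with `ℒ^(mn)`. -/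
abbrev Mat (𝔽 : Type) [Field 𝔽] (m n : ℕ) : Type := Matrix (Fin m) (Fin n) (L 𝔽)

/-- The height of a matrix, i.e. the sup-norm on `ℒ^(mn)`. -/
def mnorm {m n : ℕ} (A : Mat 𝔽 m n) : ℝ := ⨆ p : Fin m × Fin n, lnorm (A p.1 p.2)

/-- The closed ball in `ℒ^(mn)` with centre `c` and radius `ρ`. -/
def mball {m n : ℕ} (c : Mat 𝔽 m n) (ρ : ℝ) : Set (Mat 𝔽 m n) :=
  {A | mnorm (A - c) ≤ ρ}

/-- The distance `⟨x⟩` from `x ∈ ℒ^h` to the polynomial lattice `𝔽[X]^h`. -/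
def latDist {h : ℕ} (x : Fin h → L 𝔽) : ℝ :=
  sInf {r : ℝ | ∃ p : Fin h → L 𝔽, (∀ i, IsPoly (p i)) ∧ r = vnorm (fun i => x i - p i)}

/-- The set `𝔅(m,n)` of badly approximable systems of `m` linear forms in `n`
variables over `ℒ`. -/
def Bad (𝔽 : Type) [Field 𝔽] [Fintype 𝔽] (m n : ℕ) : Set (Mat 𝔽 m n) :=
  {A | ∃ K : ℝ, 0 < K ∧ ∀ q : Fin m → L 𝔽, (∀ i, IsPoly (q i)) → q ≠ 0 →
    latDist (Matrix.vecMul q A) ^ n > K / vnorm q ^ m}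

/-- The Hausdorff `s`-measure of `E ⊆ ℒ^(mn)`, defined through countable covers by
balls of radii `< δ`, letting `δ → 0` (the infimum over `δ`-covers is nonincreasing
in `δ`, so the limit is the supremum over `δ > 0`). -/
def hMeasure {m n : ℕ} (s : ℝ) (E : Set (Mat 𝔽 m n)) : ℝ≥0∞ :=
  ⨆ (δ : ℝ) (_ : 0 < δ),
    ⨅ (c : ℕ → Mat 𝔽 m n) (ρ : ℕ → ℝ) (_ : ∀ i, 0 < ρ i ∧ ρ i < δ)
      (_ : E ⊆ ⋃ i, mball (c i) (ρ i)), ∑' i, ENNReal.ofReal (ρ i ^ s)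

/-- The Hausdorff dimension of `E ⊆ ℒ^(mn)`. -/
def hdim {m n : ℕ} (E : Set (Mat 𝔽 m n)) : ℝ :=
  sInf {s : ℝ | 0 ≤ s ∧ hMeasure s E = 0}

/-! ### Schmidt `(α,β)`-games on `ℒ^(mn)` -/

/-- A formal ball: an element of `Ω = ℒ^(mn) × ℝ`. -/
structure FBall (𝔽 : Type) [Field 𝔽] (m n : ℕ) where
  /-- centre -/
  c : Mat 𝔽 m n
  /-- radius -/
  r : ℝ

/-- Formal inclusion of formal balls: `(c₁,ρ₁) ⊆ (c₂,ρ₂)` iff `ρ₁ + ‖c₁ - c₂‖_∞ ≤ ρ₂`. -/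
def FBall.ssub {m n : ℕ} (B₁ B₂ : FBall 𝔽 m n) : Prop :=
  B₁.r + mnorm (B₁.c - B₂.c) ≤ B₂.r

/-- The subset of `ℒ^(mn)` determined by a formal ball. -/
def FBall.toSet {m n : ℕ} (B : FBall 𝔽 m n) : Set (Mat 𝔽 m n) := mball B.c B.r

/-- A strategy for White: given the balls `B₁, …, B_{i+1}` chosen by Black so far,
produce White's next ball. -/
abbrev Strategy (𝔽 : Type) [Field 𝔽] (m n : ℕ) : Type :=
  (i : ℕ) → (Fin (i + 1) → FBall 𝔽 m n) → FBall 𝔽 m n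

/-- White's move at stage `i` when following strategy `str` against Black's balls `B`. -/
def wMove {m n : ℕ} (str : Strategy 𝔽 m n) (B : ℕ → FBall 𝔽 m n) (i : ℕ) : FBall 𝔽 m n :=
  str i fun j => B j.1

/-- Black's move `B_{j+2}` is legal (for parameter `β`): it is a formal subset of
White's ball `W_{j+1}` and has radius `β · ρ(W_{j+1})`. -/
def BlackOk {m n : ℕ} (β : ℝ) (str : Strategy 𝔽 m n) (B : ℕ → FBall 𝔽 m n) (j : ℕ) : Prop :=
  (B (j + 1)).ssub (wMove str B j) ∧ (B (j + 1)).r = β * (wMove str B j).r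

/-- White's move `W_{i+1}` is legal (for parameter `α`): it is a formal subset of
Black's ball `B_{i+1}` and has radius `α · ρ(B_{i+1})`. -/
def WhiteOk {m n : ℕ} (α : ℝ) (str : Strategy 𝔽 m n) (B : ℕ → FBall 𝔽 m n) (i : ℕ) : Prop :=
  (wMove str B i).ssub (B i) ∧ (wMove str B i).r = α * (B i).r

/-- `str` is a winning strategy for White in the `(α,β;S)`-game: against any
sequence of Black balls, White's moves are legal as long as Black has played
legally so far, and if the whole play is legal then the intersection of the
chosen balls is contained in `S`. -/
def WinningStrategy {m n : ℕ} (α β : ℝ) (S : Set (Mat 𝔽 m n)) (str : Strategy 𝔽 m n) : Prop :=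
  ∀ B : ℕ → FBall 𝔽 m n, 0 ≤ (B 0).r →
    (∀ i, (∀ j < i, BlackOk β str B j) → WhiteOk α str B i) ∧
    ((∀ j, BlackOk β str B j) → (⋂ i, (B i).toSet) ⊆ S)

/-- `S` is `(α,β)`-winning. -/
def IsWinningAB {m n : ℕ} (α β : ℝ) (S : Set (Mat 𝔽 m n)) : Prop :=
  ∃ str : Strategy 𝔽 m n, WinningStrategy α β S str

/-- `S` is `α`-winning. -/
def IsWinningA {m n : ℕ} (α : ℝ) (S : Set (Mat 𝔽 m n)) : Prop :=
  ∀ β : ℝ, 0 < β → β < 1 → IsWinningAB α β S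

/-- The winning dimension of `S` (a supremum of a set of reals, which is `0` by
convention when the set is empty). -/
def windim {m n : ℕ} (S : Set (Mat 𝔽 m n)) : ℝ :=
  sSup {α : ℝ | 0 < α ∧ α < 1 ∧ IsWinningA α S}

/-! ### The matrices `Ā`, `Ā^*` and the quantities `M_v`, `D_v`, `∇D_v` -/

/-- `Ā = [[A, I_m], [I_n, 0]]`. Rows are indexed by `Fin m ⊕ Fin n`
(coordinates `q_1, …, q_{m+n}`), columns by `Fin n ⊕ Fin m`. -/
def Abar {m n : ℕ} (A : Mat 𝔽 m n) : Matrix (Fin m ⊕ Fin n) (Fin n ⊕ Fin m) (L 𝔽) :=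
  Matrix.fromBlocks A 1 1 0

/-- `Ā^* = [[Aᵀ, I_n], [I_m, 0]]`. Rows are indexed by `Fin n ⊕ Fin m`,
columns by `Fin m ⊕ Fin n`. -/
def AbarStar {m n : ℕ} (A : Mat 𝔽 m n) : Matrix (Fin n ⊕ Fin m) (Fin m ⊕ Fin n) (L 𝔽) :=
  Matrix.fromBlocks A.transpose 1 1 0

/-- The standard bilinear form `x·y = Σ_i x_i y_i` on `ℒ^ι`. -/
def dotL {ι : Type*} [Fintype ι] (x y : ι → L 𝔽) : L 𝔽 := ∑ i, x i * y i

/-- Strictly increasing `v`-tuples `1 ≤ i_1 < ⋯ < i_v ≤ m`. -/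
def IncTuple (v m : ℕ) : Type := {f : Fin v → Fin m // StrictMono f}

/-- The vector `M_v(A) ∈ ℒ^(C(m,v)²)` of the determinants
`det (y_{i_r} · C_{j_s}(Ā^*))_{1 ≤ r,s ≤ v}` over all strictly increasing index
tuples.  (For `v = 0` every coordinate is an empty determinant, i.e. `1`.) -/
def MvVec {m n : ℕ} (y : Fin m → (Fin n ⊕ Fin m → L 𝔽)) (v : ℕ) (A : Mat 𝔽 m n) :
    IncTuple v m × IncTuple v m → L 𝔽 := fun p =>
  Matrix.det (Matrix.of fun r s : Fin v =>
    dotL (y (p.1.1 r)) fun t => AbarStar A t (Sum.inl (p.2.1 s)))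

/-- `‖M_v(A)‖_∞`. -/
def MvNorm {m n : ℕ} (y : Fin m → (Fin n ⊕ Fin m → L 𝔽)) (v : ℕ) (A : Mat 𝔽 m n) : ℝ :=
  vnorm (MvVec y v A)

/-- `M_v(K) = max_{A ∈ K} ‖M_v(A)‖_∞` for `K ⊆ ℒ^(mn)`. -/
def MvSet {m n : ℕ} (y : Fin m → (Fin n ⊕ Fin m → L 𝔽)) (v : ℕ) (K : Set (Mat 𝔽 m n)) : ℝ :=
  sSup {r : ℝ | ∃ A ∈ K, r = MvNorm y v A}

/-- `D_v(A) = det (y_h · C_l(Ā^*))_{1 ≤ h,l ≤ v}`. -/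
def Dv {m n : ℕ} (y : Fin m → (Fin n ⊕ Fin m → L 𝔽)) (v : ℕ) (hv : v ≤ m)
    (A : Mat 𝔽 m n) : L 𝔽 :=
  Matrix.det (Matrix.of fun h l : Fin v =>
    dotL (y (Fin.castLE hv h)) fun t => AbarStar A t (Sum.inl (Fin.castLE hv l)))

/-- The discrete gradient `∇D_v(A) ∈ ℒ^(mn)`, with coordinates
`D_v(A + E_{ij}) - D_v(A)`. -/
def gradDv {m n : ℕ} (y : Fin m → (Fin n ⊕ Fin m → L 𝔽)) (v : ℕ) (hv : v ≤ m)
    (A : Mat 𝔽 m n) : Fin m × Fin n → L 𝔽 := fun p =>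
  Dv y v hv (A + Matrix.single p.1 p.2 1) - Dv y v hv A

/-- `y_1, …, y_m ∈ ℒ^(m+n)` form an orthonormal system: `y_h · y_{h'} = δ_{h h'}`
and `‖t_1 y_1 + ⋯ + t_m y_m‖_∞ = max_h ‖t_h‖`. -/
def OrthoSystem {m n : ℕ} (y : Fin m → (Fin n ⊕ Fin m → L 𝔽)) : Prop :=
  (∀ h h', dotL (y h) (y h') = if h = h' then 1 else 0) ∧
  (∀ t : Fin m → L 𝔽, vnorm (fun r => ∑ h, t h * y h r) = ⨆ h, lnorm (t h))

/-! ### Distance functions, parallelepipeds and successive minima -/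

/-- The `j`-th successive minimum of a distance function `F` on `ℒ^N`: the infimum
of all `λ > 0` such that `{F < λ}` contains `j` linearly independent points of
`𝔽[X]^N`. -/
def succMin {N : ℕ} (F : (Fin N → L 𝔽) → ℝ) (j : ℕ) : ℝ :=
  sInf {lam : ℝ | 0 < lam ∧ ∃ v : Fin j → (Fin N → L 𝔽),
    (∀ r, ∀ i, IsPoly (v r i)) ∧ LinearIndependent (L 𝔽) v ∧ ∀ r, F (v r) < lam}

/-- The distance function `F_A(x) = max_j c_j⁻¹ ‖Σ_i x_i a_{ij}‖`. -/
def FA {N : ℕ} (A : Matrix (Fin N) (Fin N) (L 𝔽)) (c : Fin N → ℝ)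
    (x : Fin N → L 𝔽) : ℝ :=
  ⨆ j, (c j)⁻¹ * lnorm (∑ i, x i * A i j)

/-- The parallelepiped `P_A(λ) = {x ∈ ℒ^N : F_A(x) < λ}`. -/
def PA {N : ℕ} (A : Matrix (Fin N) (Fin N) (L 𝔽)) (c : Fin N → ℝ) (lam : ℝ) :
    Set (Fin N → L 𝔽) := {x | FA A c x < lam}

/-- The polar distance function `F_A^*(y) = sup_{x ≠ 0} ‖x·y‖ / F_A(x)`. -/
def FAstar {N : ℕ} (A : Matrix (Fin N) (Fin N) (L 𝔽)) (c : Fin N → ℝ)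
    (y : Fin N → L 𝔽) : ℝ :=
  ⨆ x : {x : Fin N → L 𝔽 // x ≠ 0}, lnorm (dotL x.1 y) / FA A c x.1

/-! ### Haar measure, characterized by translation invariance and normalization -/

/-- The Borel σ-algebra on `ℒ^N`, generated by the balls. -/
def vecSigma (𝔽 : Type) [Field 𝔽] [Fintype 𝔽] (N : ℕ) : MeasurableSpace (Fin N → L 𝔽) :=
  MeasurableSpace.generateFrom {s | ∃ c ρ, (0 : ℝ) < ρ ∧ s = vball c ρ}

/-- `μ` is the Haar measure on `ℒ^N`: translation invariant and normalized so that
the unit ball `I^N` has measure `1` (these properties determine it uniquely). -/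
def IsHaarVec {N : ℕ} (μ : @Measure (Fin N → L 𝔽) (vecSigma 𝔽 N)) : Prop :=
  (∀ (v : Fin N → L 𝔽) (s : Set (Fin N → L 𝔽)), μ ((fun x => x + v) ⁻¹' s) = μ s) ∧
  μ {x | ∀ i, lnorm (x i) < 1} = 1

/-- The Borel σ-algebra on `ℒ^(mn)`, generated by the balls. -/
def matSigma (𝔽 : Type) [Field 𝔽] [Fintype 𝔽] (m n : ℕ) : MeasurableSpace (Mat 𝔽 m n) :=
  MeasurableSpace.generateFrom {s | ∃ c ρ, (0 : ℝ) < ρ ∧ s = mball c ρ}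

/-- `μ` is the Haar measure on `ℒ^(mn)`: translation invariant and normalized so
that the unit ball `I^(mn)` has measure `1`. -/
def IsHaarMat {m n : ℕ} (μ : @Measure (Mat 𝔽 m n) (matSigma 𝔽 m n)) : Prop :=
  (∀ (v : Mat 𝔽 m n) (s : Set (Mat 𝔽 m n)), μ ((fun x => x + v) ⁻¹' s) = μ s) ∧
  μ {A | ∀ i j, lnorm (A i j) < 1} = 1

/-! ### The constants of Section 3 -/

/-- `τ = m/(m+n)`. -/
def tau (m n : ℕ) : ℝ := m / (m + n)

/-- `δ = R^(-m(m+n)²)`. -/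
def del (R : ℝ) (m n : ℕ) : ℝ := R ^ (-((m : ℝ) * ((m : ℝ) + n) ^ 2))

/-- `δ* = R^(-n(m+n)²)`. -/
def delStar (R : ℝ) (m n : ℕ) : ℝ := R ^ (-((n : ℝ) * ((m : ℝ) + n) ^ 2))

theorem lnorm_zero' : lnorm (0 : L 𝔽) = 0 := by simp [lnorm]

theorem card_gt_one' : (1 : ℝ) < (Fintype.card 𝔽 : ℝ) := by
  exact_mod_cast Fintype.one_lt_card

theorem lnorm_nonneg' (x : L 𝔽) : 0 ≤ lnorm x := by
  unfold lnorm
  split_ifs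
  · exact le_refl _
  · positivity

theorem lnorm_neg' (x : L 𝔽) : lnorm (-x) = lnorm x := by
  unfold lnorm
  simp [HahnSeries.order_neg]

theorem lnorm_mul' (x y : L 𝔽) : lnorm (x * y) = lnorm x * lnorm y := by
  by_cases hx : x = 0
  · simp [hx, lnorm]
  by_cases hy : y = 0
  · simp [hy, lnorm]
  have h0 : (Fintype.card 𝔽 : ℝ) ≠ 0 := by
    have := card_gt_one' (𝔽 := 𝔽)
    positivity
  unfold lnorm
  rw [if_neg hx, if_neg hy, if_neg (mul_ne_zero hx hy), HahnSeries.order_mul hx hy, neg_add,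
    zpow_add₀ h0]

theorem lnorm_one' : lnorm (1 : L 𝔽) = 1 := by simp [lnorm]

theorem lnorm_add_le' (x y : L 𝔽) {B : ℝ} (hx : lnorm x ≤ B) (hy : lnorm y ≤ B) :
    lnorm (x + y) ≤ B := by
  by_cases hx0 : x = 0
  · simpa [hx0] using hy
  by_cases hy0 : y = 0
  · simpa [hy0] using hx
  by_cases hxy : x + y = 0
  · rw [hxy, lnorm_zero']
    exact (lnorm_nonneg' x).trans hx
  have h := HahnSeries.min_order_le_order_add hxy
  unfold lnorm at *
  rw [if_neg hx0] at hx
  rw [if_neg hy0] at hy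
  rw [if_neg hxy]
  have h1 := (card_gt_one' (𝔽 := 𝔽)).le
  rcases min_le_iff.1 h with h | h
  · exact (zpow_le_zpow_right₀ h1 (neg_le_neg h)).trans hx
  · exact (zpow_le_zpow_right₀ h1 (neg_le_neg h)).trans hy

theorem lnorm_sum_le' {ι : Type*} (s : Finset ι) (f : ι → L 𝔽) {B : ℝ} (hB : 0 ≤ B)
    (h : ∀ i ∈ s, lnorm (f i) ≤ B) : lnorm (∑ i ∈ s, f i) ≤ B := by
  induction s using Finset.induction_on with
  | empty => simpa [lnorm_zero'] using hB
  | insert a s ha ih =>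
    rw [Finset.sum_insert ha]
    exact lnorm_add_le' _ _ (h _ (by simp)) (ih fun i hi => h i (by simp [hi]))

theorem lnorm_neg_one_pow' (k : ℕ) : lnorm ((-1 : L 𝔽) ^ k) = 1 := by
  rcases neg_one_pow_eq_or (L 𝔽) k with h | h <;> simp [h, lnorm_neg', lnorm_one']

theorem le_vnorm' {ι : Type*} [Finite ι] (x : ι → L 𝔽) (i : ι) : lnorm (x i) ≤ vnorm x :=
  le_ciSup (f := fun i => lnorm (x i)) (Set.finite_range _).bddAbove i

theorem vnorm_nonneg' {ι : Type*} (x : ι → L 𝔽) : 0 ≤ vnorm x :=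
  Real.iSup_nonneg fun i => lnorm_nonneg' _

theorem incTuple_finite (v m : ℕ) : Finite (IncTuple v m) := by
  unfold IncTuple
  infer_instance

theorem ortho_le_one {m n : ℕ} (y : Fin m → (Fin n ⊕ Fin m → L 𝔽)) (hy : OrthoSystem y)
    (h : Fin m) (r : Fin n ⊕ Fin m) : lnorm (y h r) ≤ 1 := by
  have h2 := hy.2 (fun k => if k = h then 1 else 0)
  have h3 := le_vnorm' (fun r => ∑ k, (if k = h then (1 : L 𝔽) else 0) * y k r) r
  rw [h2] at h3
  simp only [ite_mul, one_mul, zero_mul, Finset.sum_ite_eq', Finset.mem_univ, if_true] at h3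
  refine h3.trans (Real.iSup_le (fun k => ?_) zero_le_one)
  split_ifs
  · rw [lnorm_one']
  · rw [lnorm_zero']
    exact zero_le_one

theorem dot_single {m n : ℕ} (u : Fin n ⊕ Fin m → L 𝔽) (A : Mat 𝔽 m n) (i : Fin m) (j : Fin n)
    (l : Fin m) :
    dotL u (fun t => AbarStar (A + Matrix.single i j 1) t (Sum.inl l)) =
      dotL u (fun t => AbarStar A t (Sum.inl l)) + if l = i then u (Sum.inl j) else 0 := by
  unfold dotL AbarStar
  simp only [Fintype.sum_sum_type, Matrix.fromBlocks_apply₁₁, Matrix.fromBlocks_apply₂₁,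
    Matrix.transpose_apply, Matrix.add_apply, mul_add, Finset.sum_add_distrib]
  have : ∑ x, u (Sum.inl x) * Matrix.single i j (1 : L 𝔽) l x =
      if l = i then u (Sum.inl j) else 0 := by
    rw [Finset.sum_eq_single j]
    · by_cases h : l = i
      · subst h
        simp
      · rw [Matrix.single_apply_of_ne _ _ _ _ _ (fun hh => h hh.1.symm)]
        simp [h]
    · intro b _ hb
      rw [Matrix.single_apply_of_ne _ _ _ _ _ (fun hh => hb hh.2.symm), mul_zero]
    · simp
  rw [this]
  ring

theorem gradDv_eq_zero {m n w : ℕ} (y : Fin m → (Fin n ⊕ Fin m → L 𝔽)) (hv : w ≤ m)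
    (A : Mat 𝔽 m n) (i : Fin m) (j : Fin n) (hi : ∀ l : Fin w, Fin.castLE hv l ≠ i) :
    gradDv y w hv A (i, j) = 0 := by
  unfold gradDv Dv
  simp only [dot_single, hi, if_false, add_zero, sub_self]

theorem gradDv_eq {m n w : ℕ} (y : Fin m → (Fin n ⊕ Fin m → L 𝔽)) (hv : w + 1 ≤ m)
    (A : Mat 𝔽 m n) (k : Fin (w + 1)) (j : Fin n) :
    gradDv y (w + 1) hv A (Fin.castLE hv k, j) =
      ∑ h : Fin (w + 1), (-1) ^ (h + k : ℕ) * y (Fin.castLE hv h) (Sum.inl j) *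
        MvVec y w A
          (⟨fun r => Fin.castLE hv (h.succAbove r),
            (Fin.strictMono_castLE hv).comp (Fin.strictMono_succAbove h)⟩,
           ⟨fun r => Fin.castLE hv (k.succAbove r),
            (Fin.strictMono_castLE hv).comp (Fin.strictMono_succAbove k)⟩) := by
  unfold gradDv Dv MvVec
  rw [Matrix.det_succ_column _ k, Matrix.det_succ_column _ k, ← Finset.sum_sub_distrib]
  refine Finset.sum_congr rfl fun h _ => ?_
  have e : ∀ r : Fin w, Fin.castLE hv (k.succAbove r) ≠ Fin.castLE hv k := fun r hr =>
    Fin.succAbove_ne k r ((Fin.strictMono_castLE hv).injective hr)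
  have e2 : (Matrix.of fun h l : Fin (w + 1) => dotL (y (Fin.castLE hv h)) fun t =>
      AbarStar (A + Matrix.single (Fin.castLE hv k) j 1) t (Sum.inl (Fin.castLE hv l))).submatrix
        h.succAbove k.succAbove = (Matrix.of fun h l : Fin (w + 1) => dotL (y (Fin.castLE hv h))
        fun t => AbarStar A t (Sum.inl (Fin.castLE hv l))).submatrix
        h.succAbove k.succAbove := by
    ext a b
    simp only [Matrix.submatrix_apply, Matrix.of_apply, dot_single, e, if_false, add_zero]
  dsimp only
  rw [e2]
  simp only [Matrix.of_apply, dot_single, if_true]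
  rw [← sub_mul, ← mul_sub, add_sub_cancel_left]
  rfl

/-- **Theorem (Statement 9).** (Corollary `finite2`.)  There is a constant `K₄ > 0`
depending only on `m` and `n` such that
`‖∇D_v(A') - ∇D_v(A'')‖_∞ ≤ K₄ ‖M_{v-1}(A') - M_{v-1}(A'')‖_∞`. -/
theorem gradDv_lipschitz (𝔽 : Type) [Field 𝔽] [Fintype 𝔽] (m n : ℕ)
    (hm : 0 < m) (hn : 0 < n) :
    ∃ K₄ : ℝ, 0 < K₄ ∧
      ∀ (y : Fin m → (Fin n ⊕ Fin m → L 𝔽)), OrthoSystem y →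
        ∀ (v : ℕ) (_ : 1 ≤ v) (hv : v ≤ m) (A' A'' : Mat 𝔽 m n),
          vnorm (fun p => gradDv y v hv A' p - gradDv y v hv A'' p) ≤
            K₄ * vnorm (fun p => MvVec y (v - 1) A' p - MvVec y (v - 1) A'' p) := by
  refine ⟨1, one_pos, ?_⟩
  intro y hy v hv1 hv A' A''
  obtain ⟨w, rfl⟩ : ∃ w, v = w + 1 := ⟨v - 1, by omega⟩
  rw [one_mul]
  change _ ≤ vnorm (fun p => MvVec y w A' p - MvVec y w A'' p)
  haveI := incTuple_finite w m
  have hB := vnorm_nonneg' (fun p => MvVec y w A' p - MvVec y w A'' p)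
  refine Real.iSup_le ?_ hB
  rintro ⟨i, j⟩
  beta_reduce
  by_cases hi : ∀ l : Fin (w + 1), Fin.castLE hv l ≠ i
  · rw [gradDv_eq_zero y hv A' i j hi, gradDv_eq_zero y hv A'' i j hi, sub_self, lnorm_zero']
    exact hB
  push Not at hi
  obtain ⟨k, rfl⟩ := hi
  rw [gradDv_eq, gradDv_eq, ← Finset.sum_sub_distrib]
  refine lnorm_sum_le' _ _ hB fun h _ => ?_
  rw [← mul_sub, lnorm_mul', lnorm_mul', lnorm_neg_one_pow', one_mul]
  refine (mul_le_of_le_one_left (lnorm_nonneg' _) (ortho_le_one y hy _ _)).trans ?_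
  exact le_vnorm' (fun p => MvVec y w A' p - MvVec y w A'' p) _


end FSBad
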